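/- Let d ≥ 1. There exists a constant C > 0, depending only on d, such that for every integer N ≥ 2 and every β ∈ (0, √d), ∫_{B(0,1)^N} ∏_{i=1}^N |log min_{j ≠ i} |z_i − z_j|| · (min_{j ≠ i} |z_i − z_j|)^{−β²/2} dz_1 … dz_N ≤ C^N (d − β²)^{−3⌊N/2⌋} N^N. -/

import Mathlib

/-!
A nearest-neighbour map `i ↦ F i`, with ties broken by a fixed enumeration of the edges, has no
cycles other than mutually nearest pairs. There are at most `N ^ N` such maps, so it suffices to
bound the integral of `∏ i, g |z i - z (F i)|`, where `g r = |log r| * r ^ (-β ^ 2 / 2)`, for one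
fixed map `F`. A point which is nobody's image can be integrated out at the cost of `∫ g |x|`, which
is bounded uniformly in `β`, since `β ^ 2 / 2` stays below `d / 2`. Once no such point remains, the
graph of `F` consists of at most `⌊N / 2⌋` mutual pairs; each contributes `∫ g |x| ^ 2`, which is of
order `(d - β ^ 2) ^ (-3)`.
-/

open MeasureTheory

section TwoCycles

variable {ι : Type*}

/-- The only cycles of `F` are 2-cycles; in particular `F` has no fixed point. This is the structure
of a nearest-neighbour map: following nearest neighbours ends at a mutually nearest pair. -/
def OnlyTwoCycles (F : ι → ι) : Prop :=
  ∀ i ∈ Function.periodicPts F, Function.minimalPeriod F i = 2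

variable {F : ι → ι}

lemma OnlyTwoCycles.apply_ne (hF : OnlyTwoCycles F) (i : ι) : F i ≠ i := fun hfix => by
  have hone : Function.minimalPeriod F i = 1 :=
    Function.minimalPeriod_eq_one_iff_isFixedPt.2 hfix
  have htwo := hF i (Function.mk_mem_periodicPts one_pos hfix)
  omega

lemma OnlyTwoCycles.apply_apply (hF : OnlyTwoCycles F) {i : ι}
    (hi : i ∈ Function.periodicPts F) : F (F i) = i := by
  simpa [hF i hi] using Function.iterate_minimalPeriod (f := F) (x := i)

lemma mem_periodicPts_of_injOn {s : Set ι} (hs : s.Finite) (hmaps : Set.MapsTo F s s)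
    (hinj : Set.InjOn F s) {i : ι} (hi : i ∈ s) : i ∈ Function.periodicPts F := by
  have := hs.to_subtype
  obtain ⟨n, hn, hper⟩ := Function.mem_periodicPts.1
    ((hmaps.restrict_inj.2 hinj).mem_periodicPts ⟨i, hi⟩)
  refine Function.mk_mem_periodicPts hn ?_
  have := congrArg Subtype.val hper
  rwa [hmaps.coe_iterate_restrict] at this

-- Along an orbit the edge weights decrease, so they are constant along a cycle.
lemma onlyTwoCycles_of_forall_le {α : Type*} [PartialOrder α] {w : Sym2 ι → α}
    (hw : Function.Injective w) (hne : ∀ i, F i ≠ i)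
    (hmin : ∀ i j, j ≠ i → w s(i, F i) ≤ w s(i, j)) : OnlyTwoCycles F := by
  intro i hi
  obtain ⟨n, hn, hper⟩ := Function.mem_periodicPts.1 hi
  have hstep (k : ι) : w s(F k, F (F k)) ≤ w s(k, F k) := by
    simpa only [Sym2.eq_swap] using hmin (F k) k (hne k).symm
  have hanti : Antitone fun m => w s(F^[m] i, F (F^[m] i)) := antitone_nat_of_succ_le fun m => by
    simpa only [Function.iterate_succ_apply'] using hstep (F^[m] i)
  have hle : w s(i, F i) ≤ w s(F i, F (F i)) := by
    simpa [hper.eq] using hanti (Nat.one_le_iff_ne_zero.2 hn.ne')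
  have hedge : s(F i, i) = s(F i, F (F i)) := Sym2.eq_swap.trans (hw (hle.antisymm (hstep i)))
  exact Function.minimalPeriod_eq_prime (p := 2) (Sym2.congr_right.1 hedge).symm (hne i)

lemma exists_onlyTwoCycles_forall_le [Finite ι] [Nontrivial ι] {α : Type*} [LinearOrder α]
    (w : Sym2 ι → α) :
    ∃ F : ι → ι, OnlyTwoCycles F ∧ ∀ i j, j ≠ i → w s(i, F i) ≤ w s(i, j) := by
  obtain ⟨n, ⟨e⟩⟩ := Finite.exists_equiv_fin (Sym2 ι)
  -- Ties are broken by a fixed enumeration of the edges.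
  let w' : Sym2 ι → α ×ₗ Fin n := fun p => toLex (w p, e p)
  have hw' : Function.Injective w' := fun p q hpq =>
    e.injective (congrArg (fun x => (ofLex x).2) hpq)
  have hmin (i : ι) : ∃ j ∈ ({i}ᶜ : Set ι), ∀ k ∈ ({i}ᶜ : Set ι), w' s(i, j) ≤ w' s(i, k) :=
    Set.exists_min_image _ _ (Set.toFinite _) (exists_ne i)
  choose F hne hF using hmin
  refine ⟨F, onlyTwoCycles_of_forall_le hw' hne hF, fun i j hj => ?_⟩
  exact Prod.Lex.monotone_fst _ _ (hF i j hj)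

end TwoCycles

section NearestDist

variable {ι E : Type*} [PseudoMetricSpace E]

/-- The distance from `z i` to its nearest neighbour among the other points of the configuration
`z`; for a configuration of one point this is the junk value `0`. -/
noncomputable def nearestDist (z : ι → E) (i : ι) : ℝ :=
  ⨅ j : {j : ι // j ≠ i}, dist (z i) (z j.1)

lemma nearestDist_nonneg (z : ι → E) (i : ι) : 0 ≤ nearestDist z i :=
  Real.iInf_nonneg fun _ => dist_nonneg

lemma nearestDist_le_dist (z : ι → E) {i j : ι} (hj : j ≠ i) :
    nearestDist z i ≤ dist (z i) (z j) :=
  ciInf_le (f := fun j : {j : ι // j ≠ i} => dist (z i) (z j.1))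
    ⟨0, Set.forall_mem_range.2 fun _ => dist_nonneg⟩ ⟨j, hj⟩

lemma exists_onlyTwoCycles_nearestDist_eq [Finite ι] [Nontrivial ι] (z : ι → E) :
    ∃ F : ι → ι, OnlyTwoCycles F ∧ ∀ i, nearestDist z i = dist (z i) (z (F i)) := by
  obtain ⟨F, hF, hmin⟩ := exists_onlyTwoCycles_forall_le
    (Sym2.lift ⟨fun i j => dist (z i) (z j), fun i j => dist_comm (z i) (z j)⟩)
  refine ⟨F, hF, fun i => (nearestDist_le_dist z (hF.apply_ne i)).antisymm ?_⟩
  have : Nonempty {j : ι // j ≠ i} := ⟨⟨F i, hF.apply_ne i⟩⟩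
  exact le_ciInf fun j => hmin i j.1 j.2

lemma measurable_nearestDist [Countable ι] [MeasurableSpace E] [OpensMeasurableSpace E]
    [SecondCountableTopology E] (i : ι) : Measurable fun z : ι → E => nearestDist z i :=
  Measurable.iInf fun j => (measurable_pi_apply i).dist (measurable_pi_apply j.1)

end NearestDist

section EdgeProduct

open Function
open scoped ENNReal

variable {ι E : Type*} [MeasurableSpace E] {μ : Measure E} {k : E → E → ℝ≥0∞} {F : ι → ι}

lemma lmarginal_le_mul_lmarginal_erase [DecidableEq ι] {X : ι → Type*}
    [∀ i, MeasurableSpace (X i)] {ν : ∀ i, Measure (X i)} [∀ i, SigmaFinite (ν i)]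
    {f g : (∀ i, X i) → ℝ≥0∞} (hf : Measurable f) (hg : Measurable g) {S : Finset ι} {i : ι}
    (hi : i ∈ S) {c : ℝ≥0∞} (hfg : ∀ z, ∫⁻ x, f (update z i x) ∂ν i ≤ c * g z) (z : ∀ i, X i) :
    (∫⋯∫⁻_S, f ∂ν) z ≤ c * (∫⋯∫⁻_S.erase i, g ∂ν) z := by
  rw [lmarginal_erase' _ hf hi]
  exact (lmarginal_mono hfg z).trans_eq
    (lintegral_const_mul c (hg.comp measurable_updateFinset))

/-- The product of the kernel `k` over the edges `i → F i` of the functional graph of `F` that start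
in `S`, evaluated at the configuration `z`. -/
noncomputable def edgeProd (k : E → E → ℝ≥0∞) (F : ι → ι) (S : Finset ι) (z : ι → E) : ℝ≥0∞ :=
  ∏ i ∈ S, k (z i) (z (F i))

lemma measurable_edgeProd (hk : Measurable (uncurry k)) (F : ι → ι) (S : Finset ι) :
    Measurable (edgeProd k F S) := by
  refine Finset.measurable_fun_prod S fun i _ => ?_
  exact hk.comp (f := fun z : ι → E => (z i, z (F i)))
    ((measurable_pi_apply i).prodMk (measurable_pi_apply (F i)))

variable [DecidableEq ι] {S : Finset ι} {i : ι}

omit [MeasurableSpace E] in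
lemma edgeProd_update (hS : ∀ l ∈ S, l ≠ i ∧ F l ≠ i) (z : ι → E) (x : E) :
    edgeProd k F S (update z i x) = edgeProd k F S z :=
  Finset.prod_congr rfl fun l hl => by
    rw [update_of_ne (hS l hl).1, update_of_ne (hS l hl).2]

lemma ne_of_mem_erase_erase_of_involutive (hinv : ∀ l ∈ S, F (F l) = l) (hi : i ∈ S) {l : ι}
    (hl : l ∈ (S.erase i).erase (F i)) : F l ≠ i ∧ F l ≠ F i := by
  simp only [Finset.mem_erase] at hl
  refine ⟨fun h => hl.1 ?_, fun h => hl.2.1 ?_⟩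
  · rw [← h, hinv l hl.2.2]
  · rw [← hinv l hl.2.2, h, hinv i hi]

variable [SigmaFinite μ] {K B : ℝ≥0∞}

lemma lmarginal_edgeProd_le_of_leaf (hk : Measurable (uncurry k))
    (hK : ∀ y, ∫⁻ x, k x y ∂μ ≤ K) (hi : i ∈ S) (hleaf : ∀ l ∈ S, F l ≠ i) (z : ι → E) :
    (∫⋯∫⁻_S, edgeProd k F S ∂fun _ => μ) z
      ≤ K * (∫⋯∫⁻_S.erase i, edgeProd k F (S.erase i) ∂fun _ => μ) z := by
  refine lmarginal_le_mul_lmarginal_erase (measurable_edgeProd hk F S)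
    (measurable_edgeProd hk F _) hi (fun z => ?_) z
  have hsplit (x : E) :
      edgeProd k F S (update z i x) = k x (z (F i)) * edgeProd k F (S.erase i) z := by
    have hrest : ∀ l ∈ S.erase i, l ≠ i ∧ F l ≠ i := fun l hl =>
      ⟨Finset.ne_of_mem_erase hl, hleaf l (Finset.mem_of_mem_erase hl)⟩
    rw [← edgeProd_update hrest z x, edgeProd, ← Finset.mul_prod_erase S _ hi, update_self,
      update_of_ne (hleaf i hi), edgeProd]
  simp_rw [hsplit]
  rw [lintegral_mul_const _ hk.of_uncurry_right]
  gcongr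
  exact hK _

lemma lmarginal_edgeProd_le_of_pair (hk : Measurable (uncurry k)) (hsymm : ∀ x y, k x y = k y x)
    (hμ : μ Set.univ ≤ K) (hB : ∀ y, ∫⁻ x, k x y ^ 2 ∂μ ≤ B) (hinv : ∀ l ∈ S, F (F l) = l)
    (hi : i ∈ S) (hj : F i ∈ S.erase i) (z : ι → E) :
    (∫⋯∫⁻_S, edgeProd k F S ∂fun _ => μ) z
      ≤ B * K * (∫⋯∫⁻_(S.erase i).erase (F i),
          edgeProd k F ((S.erase i).erase (F i)) ∂fun _ => μ) z := by
  set T := (S.erase i).erase (F i)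
  have hrest : ∀ l ∈ T, F l ≠ i ∧ F l ≠ F i := fun l =>
    ne_of_mem_erase_erase_of_involutive hinv hi
  have hTi : ∀ l ∈ T, l ≠ i ∧ F l ≠ i := fun l hl =>
    ⟨Finset.ne_of_mem_erase (Finset.mem_of_mem_erase hl), (hrest l hl).1⟩
  have hTj : ∀ l ∈ T, l ≠ F i ∧ F l ≠ F i := fun l hl => ⟨Finset.ne_of_mem_erase hl, (hrest l hl).2⟩
  have hmeas := measurable_edgeProd hk F
  have hsplit (z : ι → E) (x : E) :
      edgeProd k F S (update z i x) = k x (z (F i)) ^ 2 * edgeProd k F T z := by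
    rw [← edgeProd_update hTi z x, edgeProd, ← Finset.mul_prod_erase S _ hi,
      ← Finset.mul_prod_erase _ _ hj, hinv i hi, update_self,
      update_of_ne (Finset.ne_of_mem_erase hj), hsymm (z (F i)), ← mul_assoc, ← sq, edgeProd]
  calc (∫⋯∫⁻_S, edgeProd k F S ∂fun _ => μ) z
      ≤ B * (∫⋯∫⁻_S.erase i, edgeProd k F T ∂fun _ => μ) z := by
        refine lmarginal_le_mul_lmarginal_erase (hmeas S) (hmeas T) hi (fun z => ?_) z
        simp_rw [hsplit]
        rw [lintegral_mul_const _ (hk.of_uncurry_right.pow_const 2)]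
        gcongr
        exact hB _
    _ ≤ B * (K * (∫⋯∫⁻_T, edgeProd k F T ∂fun _ => μ) z) := by
        gcongr
        refine lmarginal_le_mul_lmarginal_erase (hmeas T) (hmeas T) hj (fun z => ?_) z
        simp_rw [edgeProd_update hTj, lintegral_const]
        rw [mul_comm]
        gcongr
    _ = B * K * (∫⋯∫⁻_T, edgeProd k F T ∂fun _ => μ) z := (mul_assoc _ _ _).symm

omit [DecidableEq ι] in
lemma OnlyTwoCycles.exists_leaf_or_forall_apply_apply (hF : OnlyTwoCycles F)
    (hmaps : Set.MapsTo F S S) :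
    (∃ i ∈ S, ∀ l ∈ S, F l ≠ i) ∨ ∀ i ∈ S, F (F i) = i := by
  refine or_iff_not_imp_left.2 fun hleaf i hi => hF.apply_apply ?_
  push Not at hleaf
  exact mem_periodicPts_of_injOn S.finite_toSet hmaps
    (Finset.injOn_of_surjOn_of_card_le F hmaps hleaf le_rfl) hi

-- Leaves of the functional graph are integrated out one at a time; each costs a factor `K`. What
-- remains is a disjoint union of 2-cycles, and each of them costs a factor `B * K`.
lemma lmarginal_edgeProd_le (hk : Measurable (uncurry k)) (hsymm : ∀ x y, k x y = k y x)
    (hK₁ : 1 ≤ K) (hB₁ : 1 ≤ B) (hμ : μ Set.univ ≤ K) (hK : ∀ y, ∫⁻ x, k x y ∂μ ≤ K)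
    (hB : ∀ y, ∫⁻ x, k x y ^ 2 ∂μ ≤ B) (hF : OnlyTwoCycles F) (S : Finset ι)
    (hmaps : Set.MapsTo F S S) (z : ι → E) :
    (∫⋯∫⁻_S, edgeProd k F S ∂fun _ => μ) z ≤ K ^ S.card * B ^ (S.card / 2) := by
  induction S using Finset.strongInduction with
  | H S ih =>
  obtain rfl | ⟨i, hi⟩ := S.eq_empty_or_nonempty
  · simp [edgeProd]
  obtain ⟨i, hi, hleaf⟩ | hinv := hF.exists_leaf_or_forall_apply_apply hmaps
  · have hcard : (S.erase i).card + 1 = S.card := Finset.card_erase_add_one hi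
    have hmaps' : Set.MapsTo F (S.erase i) (S.erase i) := fun l hl => by
      simp only [SetLike.mem_coe, Finset.mem_erase] at hl ⊢
      exact ⟨hleaf l hl.2, hmaps hl.2⟩
    calc _ ≤ K * (∫⋯∫⁻_S.erase i, edgeProd k F (S.erase i) ∂fun _ => μ) z :=
          lmarginal_edgeProd_le_of_leaf hk hK hi hleaf z
      _ ≤ K * (K ^ (S.erase i).card * B ^ ((S.erase i).card / 2)) := by
          gcongr
          exact ih _ (Finset.erase_ssubset hi) hmaps'
      _ = K ^ S.card * B ^ ((S.erase i).card / 2) := by rw [← hcard]; ring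
      _ ≤ K ^ S.card * B ^ (S.card / 2) := by
          gcongr
          exact Finset.erase_subset i S
  · have hj : F i ∈ S.erase i := Finset.mem_erase.2 ⟨hF.apply_ne i, hmaps hi⟩
    set T := (S.erase i).erase (F i) with hT
    have hcard : T.card + 1 + 1 = S.card := by
      rw [Finset.card_erase_add_one hj, Finset.card_erase_add_one hi]
    have hmaps' : Set.MapsTo F T T := fun l hl => by
      have hl' := ne_of_mem_erase_erase_of_involutive hinv hi hl
      simp only [hT, SetLike.mem_coe, Finset.mem_erase] at hl ⊢
      exact ⟨hl'.2, hl'.1, hmaps hl.2.2⟩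
    have hTS : T ⊂ S := (Finset.erase_ssubset hj).trans (Finset.erase_ssubset hi)
    calc _ ≤ B * K * (∫⋯∫⁻_T, edgeProd k F T ∂fun _ => μ) z :=
          lmarginal_edgeProd_le_of_pair hk hsymm hμ hB hinv hi hj z
      _ ≤ B * K * (K ^ T.card * B ^ (T.card / 2)) := by
          gcongr
          exact ih T hTS hmaps'
      _ = K ^ (T.card + 1) * B ^ (T.card / 2 + 1) := by ring
      _ ≤ K ^ S.card * B ^ (S.card / 2) := by
          gcongr <;> omega

end EdgeProduct

section NearestNeighbourIntegral

open scoped ENNReal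

variable {ι E : Type*} [Fintype ι] [PseudoMetricSpace E] [MeasurableSpace E]
  [OpensMeasurableSpace E] [SecondCountableTopology E] {μ : Measure E} [SigmaFinite μ]
  {g : ℝ → ℝ≥0∞} {K B : ℝ≥0∞}

lemma lintegral_prod_dist_le (hg : Measurable g) (hK₁ : 1 ≤ K) (hB₁ : 1 ≤ B)
    (hμ : μ Set.univ ≤ K) (hK : ∀ y, ∫⁻ x, g (dist x y) ∂μ ≤ K)
    (hB : ∀ y, ∫⁻ x, g (dist x y) ^ 2 ∂μ ≤ B) {F : ι → ι} (hF : OnlyTwoCycles F) :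
    ∫⁻ z : ι → E, ∏ i, g (dist (z i) (z (F i))) ∂Measure.pi (fun _ => μ)
      ≤ K ^ Fintype.card ι * B ^ (Fintype.card ι / 2) := by
  classical
  obtain _ | ⟨⟨z⟩⟩ := isEmpty_or_nonempty (ι → E)
  · simp
  rw [lintegral_eq_lmarginal_univ z]
  exact lmarginal_edgeProd_le (k := fun x y => g (dist x y)) (hg.comp measurable_dist)
    (fun x y => by rw [dist_comm]) hK₁ hB₁ hμ hK hB hF Finset.univ (by simp) z

-- The nearest-neighbour map depends on the configuration, so sum over all the maps it can be.
theorem lintegral_prod_nearestDist_le [Nontrivial ι] (hg : Measurable g) (hK₁ : 1 ≤ K)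
    (hB₁ : 1 ≤ B) (hμ : μ Set.univ ≤ K) (hK : ∀ y, ∫⁻ x, g (dist x y) ∂μ ≤ K)
    (hB : ∀ y, ∫⁻ x, g (dist x y) ^ 2 ∂μ ≤ B) :
    ∫⁻ z : ι → E, ∏ i, g (nearestDist z i) ∂Measure.pi (fun _ => μ)
      ≤ (Fintype.card ι : ℝ≥0∞) ^ Fintype.card ι
        * (K ^ Fintype.card ι * B ^ (Fintype.card ι / 2)) := by
  classical
  let P : Finset (ι → ι) := {F | OnlyTwoCycles F}
  have hcard : (P.card : ℝ≥0∞) ≤ (Fintype.card ι : ℝ≥0∞) ^ Fintype.card ι := by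
    exact_mod_cast (Finset.card_le_univ P).trans_eq Fintype.card_fun
  have hmeas (F : ι → ι) : Measurable fun z : ι → E => ∏ i, g (dist (z i) (z (F i))) :=
    measurable_edgeProd (k := fun x y => g (dist x y)) (hg.comp measurable_dist) F Finset.univ
  calc ∫⁻ z : ι → E, ∏ i, g (nearestDist z i) ∂Measure.pi (fun _ => μ)
      ≤ ∫⁻ z : ι → E, ∑ F ∈ P, ∏ i, g (dist (z i) (z (F i))) ∂Measure.pi (fun _ => μ) := by
        refine lintegral_mono fun z => ?_
        obtain ⟨F, hF, hdist⟩ := exists_onlyTwoCycles_nearestDist_eq z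
        simp_rw [hdist]
        exact Finset.single_le_sum_of_canonicallyOrdered
          (f := fun F : ι → ι => ∏ i, g (dist (z i) (z (F i)))) (by simpa [P] using hF)
    _ = ∑ F ∈ P, ∫⁻ z : ι → E, ∏ i, g (dist (z i) (z (F i))) ∂Measure.pi (fun _ => μ) :=
        lintegral_finsetSum P fun F _ => hmeas F
    _ ≤ P.card • (K ^ Fintype.card ι * B ^ (Fintype.card ι / 2)) :=
        Finset.sum_le_card_nsmul P _ _ fun F hF =>
          lintegral_prod_dist_le hg hK₁ hB₁ hμ hK hB (by simpa [P] using hF)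
    _ ≤ _ := by
        rw [nsmul_eq_mul]
        gcongr

end NearestNeighbourIntegral

section RadialPower

open Module
open scoped ENNReal

lemma abs_log_le_mul_rpow_neg {r R t : ℝ} (hr : 0 < r) (hrR : r ≤ R) (ht : 0 < t) :
    |Real.log r| ≤ (1 / t + R ^ (1 + t)) * r ^ (-t) := by
  have hrt : 0 < r ^ t := Real.rpow_pos_of_pos hr t
  rw [Real.rpow_neg hr.le, ← div_eq_mul_inv, le_div_iff₀ hrt]
  obtain hr₁ | hr₁ := le_total r 1
  · have hlog := (Real.abs_log_mul_self_rpow_lt r t hr hr₁ ht).le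
    rw [abs_mul, abs_of_pos hrt] at hlog
    have : 0 ≤ R ^ (1 + t) := Real.rpow_nonneg (hr.le.trans hrR) _
    linarith
  · calc |Real.log r| * r ^ t ≤ r * r ^ t := by
          gcongr
          rw [abs_of_nonneg (Real.log_nonneg hr₁)]
          exact Real.log_le_self hr.le
      _ = r ^ (1 + t) := by rw [Real.rpow_add hr, Real.rpow_one]
      _ ≤ R ^ (1 + t) := by gcongr
      _ ≤ 1 / t + R ^ (1 + t) := le_add_of_nonneg_left (by positivity)

lemma pow_sub_one_mul_rpow {n : ℕ} (hn : 0 < n) {y : ℝ} (hy : 0 < y) (q : ℝ) :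
    y ^ (n - 1) * y ^ q = y ^ (n + q - 1) := by
  rw [← Real.rpow_natCast, ← Real.rpow_add hy, Nat.cast_pred hn, sub_add_eq_add_sub]

variable {E : Type*} [NormedAddCommGroup E] [NormedSpace ℝ E] [FiniteDimensional ℝ E]
  [Nontrivial E] [MeasurableSpace E] [BorelSpace E] (μ : Measure E) [μ.IsAddHaarMeasure]

lemma integrableOn_ball_norm_rpow {q : ℝ} (hq : -finrank ℝ E < q) (R : ℝ) :
    IntegrableOn (fun x : E => ‖x‖ ^ q) (Metric.ball 0 R) μ := by
  obtain hR | hR := le_or_gt R 0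
  · simp [Metric.ball_eq_empty.2 hR]
  have hradial : Set.EqOn (fun y : ℝ => y ^ (finrank ℝ E - 1) • y ^ q)
      (fun y => y ^ (finrank ℝ E + q - 1)) (Set.Ioo 0 R) := fun y hy =>
    pow_sub_one_mul_rpow finrank_pos hy.1 q
  rw [integrableOn_fun_norm_addHaar μ (f := fun y => y ^ q),
    integrableOn_congr_fun hradial measurableSet_Ioo,
    intervalIntegral.integrableOn_Ioo_rpow_iff hR]
  linarith

lemma setIntegral_ball_norm_rpow {q : ℝ} (hq : -finrank ℝ E < q) {R : ℝ} (hR : 0 ≤ R) :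
    ∫ x in Metric.ball (0 : E) R, ‖x‖ ^ q ∂μ
      = finrank ℝ E * μ.real (Metric.ball 0 1) * (R ^ (finrank ℝ E + q) / (finrank ℝ E + q)) := by
  have hindicator : (Metric.ball (0 : E) R).indicator (fun x => ‖x‖ ^ q)
      = fun x => (Set.Iio R).indicator (fun y => y ^ q) ‖x‖ := by
    ext x
    simp [Set.indicator]
  have hradial : Set.EqOn
      (fun y : ℝ => y ^ (finrank ℝ E - 1) • (Set.Iio R).indicator (fun y => y ^ q) y)
      ((Set.Iio R).indicator fun y => y ^ (finrank ℝ E + q - 1)) (Set.Ioi 0) := fun y hy => by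
    by_cases hyR : y < R <;> simp [hyR, pow_sub_one_mul_rpow finrank_pos hy q]
  rw [← integral_indicator measurableSet_ball, hindicator, integral_fun_norm_addHaar,
    setIntegral_congr_fun measurableSet_Ioi hradial, setIntegral_indicator measurableSet_Iio,
    Set.Ioi_inter_Iio, ← integral_Ioc_eq_integral_Ioo, ← intervalIntegral.integral_of_le hR,
    integral_rpow (Or.inl (by linarith)), sub_add_cancel, Real.zero_rpow (by linarith), sub_zero,
    nsmul_eq_mul, smul_eq_mul, mul_assoc]

lemma setLIntegral_ball_norm_rpow {q : ℝ} (hq : -finrank ℝ E < q) {R : ℝ} (hR : 0 ≤ R) :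
    ∫⁻ x in Metric.ball (0 : E) R, ENNReal.ofReal (‖x‖ ^ q) ∂μ
      = ENNReal.ofReal (finrank ℝ E * μ.real (Metric.ball 0 1)
          * (R ^ (finrank ℝ E + q) / (finrank ℝ E + q))) := by
  rw [← setIntegral_ball_norm_rpow μ hq hR, ofReal_integral_eq_lintegral_ofReal
    (integrableOn_ball_norm_rpow μ hq R) (ae_of_all _ fun x => by positivity)]

end RadialPower

section LogKernel

open Module
open scoped ENNReal

/-- The kernel `|log r| * r ^ (-s)` of a distance `r`, set to `0` for `r ≥ R`. The cutoff makes its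
integral around every point of the whole space finite. At `r = 0` it is `0`, as `log 0 = 0`. -/
noncomputable def truncLogKernel (R s r : ℝ) : ℝ≥0∞ :=
  if r < R then ENNReal.ofReal (|Real.log r| * r ^ (-s)) else 0

lemma truncLogKernel_of_lt {R r : ℝ} (hr : r < R) (s : ℝ) :
    truncLogKernel R s r = ENNReal.ofReal (|Real.log r| * r ^ (-s)) :=
  if_pos hr

lemma truncLogKernel_of_le {R r : ℝ} (hr : R ≤ r) (s : ℝ) : truncLogKernel R s r = 0 :=
  if_neg hr.not_gt

lemma measurable_truncLogKernel (R s : ℝ) : Measurable (truncLogKernel R s) :=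
  Measurable.ite measurableSet_Iio (by fun_prop) measurable_const

lemma truncLogKernel_pow_le {R t r : ℝ} (hr : 0 ≤ r) (hrR : r < R) (ht : 0 < t) (s : ℝ) {p : ℕ}
    (hp : p ≠ 0) :
    truncLogKernel R s r ^ p
      ≤ ENNReal.ofReal ((1 / t + R ^ (1 + t)) ^ p) * ENNReal.ofReal (r ^ (-(p * (s + t)))) := by
  rw [truncLogKernel_of_lt hrR, ← ENNReal.ofReal_pow (by positivity),
    ← ENNReal.ofReal_mul (by have := hr.trans hrR.le; positivity)]
  gcongr
  obtain rfl | hr₀ := hr.eq_or_lt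
  · rw [Real.log_zero, abs_zero, zero_mul, zero_pow hp]
    positivity
  calc (|Real.log r| * r ^ (-s)) ^ p ≤ ((1 / t + R ^ (1 + t)) * r ^ (-t) * r ^ (-s)) ^ p := by
        gcongr
        exact abs_log_le_mul_rpow_neg hr₀ hrR.le ht
    _ = (1 / t + R ^ (1 + t)) ^ p * (r ^ (-(s + t))) ^ p := by
        rw [mul_assoc, ← Real.rpow_add hr₀, mul_pow, neg_add_rev]
    _ = (1 / t + R ^ (1 + t)) ^ p * r ^ (-(p * (s + t))) := by
        rw [← Real.rpow_mul_natCast hr, neg_mul, mul_comm (s + t)]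

variable {E : Type*} [NormedAddCommGroup E] [NormedSpace ℝ E] [FiniteDimensional ℝ E]
  [Nontrivial E] [MeasurableSpace E] [BorelSpace E] (μ : Measure E) [μ.IsAddHaarMeasure]

lemma lintegral_truncLogKernel_pow_le {R s t : ℝ} (hR : 0 ≤ R) (ht : 0 < t) {p : ℕ} (hp : p ≠ 0)
    (hst : p * (s + t) < finrank ℝ E) (y : E) :
    ∫⁻ x, truncLogKernel R s (dist x y) ^ p ∂μ
      ≤ ENNReal.ofReal ((1 / t + R ^ (1 + t)) ^ p * (finrank ℝ E * μ.real (Metric.ball 0 1)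
          * (R ^ (finrank ℝ E - p * (s + t)) / (finrank ℝ E - p * (s + t))))) := by
  calc ∫⁻ x, truncLogKernel R s (dist x y) ^ p ∂μ
      = ∫⁻ x, truncLogKernel R s ‖x‖ ^ p ∂μ := by
        simp_rw [dist_eq_norm]
        exact lintegral_sub_right_eq_self (fun x => truncLogKernel R s ‖x‖ ^ p) y
    _ = ∫⁻ x in Metric.ball 0 R, truncLogKernel R s ‖x‖ ^ p ∂μ := by
        rw [← lintegral_indicator measurableSet_ball]
        congr with x
        by_cases hx : ‖x‖ < R
        · simp [hx]
        · simp [hx, truncLogKernel_of_le (not_lt.1 hx), hp]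
    _ ≤ ∫⁻ x in Metric.ball 0 R, ENNReal.ofReal ((1 / t + R ^ (1 + t)) ^ p)
          * ENNReal.ofReal (‖x‖ ^ (-(p * (s + t)))) ∂μ :=
        setLIntegral_mono' measurableSet_ball fun x hx =>
          truncLogKernel_pow_le (norm_nonneg x) (mem_ball_zero_iff.1 hx) ht s hp
    _ = _ := by
        rw [lintegral_const_mul' _ _ ENNReal.ofReal_ne_top,
          setLIntegral_ball_norm_rpow μ (neg_lt_neg hst) hR, ← ENNReal.ofReal_mul (by positivity),
          sub_eq_add_neg]

lemma exists_lintegral_truncLogKernel_le {R : ℝ} (hR : 1 ≤ R) :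
    ∃ A : ℝ, ∀ s : ℝ, 0 ≤ s → 2 * s < finrank ℝ E → ∀ y : E,
      ∫⁻ x, truncLogKernel R s (dist x y) ∂μ ≤ ENNReal.ofReal A := by
  have hD : (0 : ℝ) < finrank ℝ E := Nat.cast_pos.2 finrank_pos
  set D : ℝ := (finrank ℝ E : ℝ)
  refine ⟨(1 / (D / 4) + R ^ (1 + D / 4)) * (D * μ.real (Metric.ball 0 1) * (R ^ D / (D / 4))),
    fun s hs hsD y => ?_⟩
  have hkey := lintegral_truncLogKernel_pow_le μ (t := D / 4) (zero_le_one.trans hR) (by positivity)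
    one_ne_zero (show ((1 : ℕ) : ℝ) * (s + D / 4) < D by norm_num; linarith) y
  simp only [pow_one, Nat.cast_one, one_mul] at hkey
  refine hkey.trans ?_
  gcongr <;> linarith

-- The exponent 3 arises as 2 + 1: two powers of `D - 2 * s` are lost in trading each logarithm for
-- `r ^ (-(D - 2 * s) / 4)`, and one in integrating `r ^ (-(D + 2 * s) / 2)`.
lemma exists_lintegral_truncLogKernel_sq_le {R : ℝ} (hR : 1 ≤ R) :
    ∃ A : ℝ, ∀ s : ℝ, 0 ≤ s → 2 * s < finrank ℝ E → ∀ y : E,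
      ∫⁻ x, truncLogKernel R s (dist x y) ^ 2 ∂μ
        ≤ ENNReal.ofReal (A * ((finrank ℝ E - 2 * s) ^ 3)⁻¹) := by
  set D : ℝ := (finrank ℝ E : ℝ) with hD
  refine ⟨(4 + D * R ^ (1 + D)) ^ 2 * (D * μ.real (Metric.ball 0 1) * (R ^ D * 2)),
    fun s hs hsD y => ?_⟩
  set δ := D - 2 * s
  have hδ₀ : 0 < δ := sub_pos.2 hsD
  have hδD : δ ≤ D := sub_le_self D (by positivity)
  have hexp : D - ((2 : ℕ) : ℝ) * (s + δ / 4) = δ / 2 := by simp only [δ]; push_cast; ring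
  have hlog : 1 / (δ / 4) + R ^ (1 + δ / 4) ≤ (4 + D * R ^ (1 + D)) / δ := by
    have hRδ : R ^ (1 + δ / 4) ≤ R ^ (1 + D) := by gcongr; linarith
    rw [le_div_iff₀ hδ₀, add_mul, mul_comm D]
    gcongr
    exact (by field_simp : 1 / (δ / 4) * δ = 4).le
  refine (lintegral_truncLogKernel_pow_le μ (t := δ / 4) (zero_le_one.trans hR) (by positivity)
    two_ne_zero (sub_pos.1 (by rw [← hD, hexp]; positivity)) y).trans ?_
  rw [← hD, hexp]
  apply ENNReal.ofReal_le_ofReal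
  calc (1 / (δ / 4) + R ^ (1 + δ / 4)) ^ 2
        * (D * μ.real (Metric.ball 0 1) * (R ^ (δ / 2) / (δ / 2)))
      ≤ ((4 + D * R ^ (1 + D)) / δ) ^ 2
        * (D * μ.real (Metric.ball 0 1) * (R ^ D / (δ / 2))) := by
        gcongr
        linarith
    _ = _ := by field_simp

end LogKernel

section BoundedSet

open Module
open scoped ENNReal

lemma ofReal_prod_eq_prod_truncLogKernel {ι E : Type*} [Fintype ι] [Nontrivial ι]
    [PseudoMetricSpace E] {S : Set E} {R : ℝ} (hS : ∀ x ∈ S, ∀ y ∈ S, dist x y < R) (s : ℝ)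
    {z : ι → E} (hz : ∀ i, z i ∈ S) :
    ENNReal.ofReal (∏ i, |Real.log (nearestDist z i)| * nearestDist z i ^ (-s))
      = ∏ i, truncLogKernel R s (nearestDist z i) := by
  rw [ENNReal.ofReal_prod_of_nonneg fun i _ =>
    mul_nonneg (abs_nonneg _) (Real.rpow_nonneg (nearestDist_nonneg z i) _)]
  refine Finset.prod_congr rfl fun i _ => (truncLogKernel_of_lt ?_ s).symm
  obtain ⟨j, hj⟩ := exists_ne i
  exact (nearestDist_le_dist z hj).trans_lt (hS _ (hz i) _ (hz j))

lemma pow_mul_pow_half_le_ofReal {C δ : ℝ} (hC : 1 ≤ C) (hδ : 0 < δ) (N : ℕ) :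
    (N : ℝ≥0∞) ^ N * (ENNReal.ofReal C ^ N * ENNReal.ofReal (C * (δ ^ 3)⁻¹) ^ (N / 2))
      ≤ ENNReal.ofReal ((C * C) ^ N * δ ^ (-(3 * ((N / 2 : ℕ) : ℝ))) * (N : ℝ) ^ N) := by
  have hexp : δ ^ (-(3 * ((N / 2 : ℕ) : ℝ))) = ((δ ^ 3)⁻¹) ^ (N / 2) := by
    rw [Real.rpow_neg hδ.le, inv_pow, ← pow_mul, ← Real.rpow_natCast]
    norm_cast
  have : 0 ≤ C := zero_le_one.trans hC
  rw [← ENNReal.ofReal_natCast, ← ENNReal.ofReal_pow (by positivity),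
    ← ENNReal.ofReal_pow (by positivity), ← ENNReal.ofReal_pow (by positivity),
    ← ENNReal.ofReal_mul (by positivity), ← ENNReal.ofReal_mul (by positivity), hexp]
  apply ENNReal.ofReal_le_ofReal
  calc (N : ℝ) ^ N * (C ^ N * (C * (δ ^ 3)⁻¹) ^ (N / 2))
      = C ^ N * C ^ (N / 2) * ((δ ^ 3)⁻¹) ^ (N / 2) * (N : ℝ) ^ N := by ring
    _ ≤ C ^ N * C ^ N * ((δ ^ 3)⁻¹) ^ (N / 2) * (N : ℝ) ^ N := by
        gcongr
        exact Nat.div_le_self N 2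
    _ = (C * C) ^ N * ((δ ^ 3)⁻¹) ^ (N / 2) * (N : ℝ) ^ N := by rw [mul_pow C C]

variable {E : Type*} [NormedAddCommGroup E] [NormedSpace ℝ E] [FiniteDimensional ℝ E]
  [Nontrivial E] [MeasurableSpace E] [BorelSpace E] (μ : Measure E) [μ.IsAddHaarMeasure]

lemma exists_uniform_truncLogKernel_bound {S : Set E} (hS : μ S ≠ ∞) {R : ℝ} (hR : 1 ≤ R) :
    ∃ C : ℝ, 1 ≤ C ∧ μ S ≤ ENNReal.ofReal C ∧ ∀ s : ℝ, 0 ≤ s → 2 * s < finrank ℝ E →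
      1 ≤ C * ((finrank ℝ E - 2 * s) ^ 3)⁻¹ ∧ ∀ y : E,
        ∫⁻ x, truncLogKernel R s (dist x y) ∂μ ≤ ENNReal.ofReal C ∧
        ∫⁻ x, truncLogKernel R s (dist x y) ^ 2 ∂μ
          ≤ ENNReal.ofReal (C * ((finrank ℝ E - 2 * s) ^ 3)⁻¹) := by
  obtain ⟨A₁, hA₁⟩ := exists_lintegral_truncLogKernel_le μ hR
  obtain ⟨A₂, hA₂⟩ := exists_lintegral_truncLogKernel_sq_le μ hR
  obtain ⟨C, h₁, hμC, hDC, hA₁C, hA₂C⟩ : ∃ C : ℝ,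
      1 ≤ C ∧ μ.real S ≤ C ∧ (finrank ℝ E : ℝ) ^ 3 ≤ C ∧ A₁ ≤ C ∧ A₂ ≤ C :=
    ⟨max 1 (max (μ.real S) (max ((finrank ℝ E : ℝ) ^ 3) (max A₁ A₂))), by simp⟩
  refine ⟨C, h₁, (ENNReal.le_ofReal_iff_toReal_le hS (by linarith)).2 hμC,
    fun s hs hsD => ⟨?_, fun y => ⟨?_, ?_⟩⟩⟩
  · rw [← div_eq_mul_inv, one_le_div (pow_pos (sub_pos.2 hsD) 3)]
    refine le_trans ?_ hDC
    gcongr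
    exact sub_le_self _ (by positivity)
  · exact (hA₁ s hs hsD y).trans (ENNReal.ofReal_le_ofReal hA₁C)
  · refine (hA₂ s hs hsD y).trans (ENNReal.ofReal_le_ofReal ?_)
    exact mul_le_mul_of_nonneg_right hA₂C (inv_nonneg.2 (pow_pos (sub_pos.2 hsD) 3).le)

theorem stmt_7_general {S : Set E} (hS : Bornology.IsBounded S) :
    ∃ C : ℝ, 0 < C ∧ ∀ N : ℕ, 2 ≤ N → ∀ b : ℝ, 0 ≤ b → b < finrank ℝ E →
      ∫⁻ z : Fin N → E in Set.univ.pi (fun _ => S),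
          ENNReal.ofReal (∏ i, |Real.log (nearestDist z i)| * nearestDist z i ^ (-b / 2))
          ∂Measure.pi (fun _ => μ)
        ≤ ENNReal.ofReal
            (C ^ N * (finrank ℝ E - b) ^ (-(3 * ((N / 2 : ℕ) : ℝ))) * (N : ℝ) ^ N) := by
  obtain ⟨M, hM₀, hM⟩ := (Metric.isBounded_iff_exists_ge 0).1 hS
  obtain ⟨C, hC, hSC, hbound⟩ := exists_uniform_truncLogKernel_bound μ hS.measure_lt_top.ne
    (show 1 ≤ M + 1 by linarith)
  refine ⟨C * C, by positivity, fun N hN b hb hbD => ?_⟩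
  have := Fin.nontrivial_iff_two_le.2 hN
  obtain ⟨hB₁, hkernel⟩ := hbound (b / 2) (by positivity) (by linarith)
  rw [mul_div_cancel₀ b two_ne_zero] at hB₁ hkernel
  have hmeas := measurable_truncLogKernel (M + 1) (b / 2)
  calc ∫⁻ z : Fin N → E in Set.univ.pi (fun _ => S),
          ENNReal.ofReal (∏ i, |Real.log (nearestDist z i)| * nearestDist z i ^ (-b / 2))
          ∂Measure.pi (fun _ => μ)
      ≤ ∫⁻ z : Fin N → E in Set.univ.pi (fun _ => S),
          ∏ i, truncLogKernel (M + 1) (b / 2) (nearestDist z i) ∂Measure.pi (fun _ => μ) := by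
        refine setLIntegral_mono (Finset.measurable_fun_prod _ fun i _ =>
          hmeas.comp (measurable_nearestDist i)) fun z hz => ?_
        rw [neg_div, ofReal_prod_eq_prod_truncLogKernel
          (fun x hx y hy => (hM hx hy).trans_lt (lt_add_one M)) _ fun i => hz i trivial]
    _ ≤ (N : ℝ≥0∞) ^ N * (ENNReal.ofReal C ^ N
          * ENNReal.ofReal (C * ((finrank ℝ E - b) ^ 3)⁻¹) ^ (N / 2)) := by
        rw [Measure.restrict_pi_pi]
        simpa only [Fintype.card_fin] using lintegral_prod_nearestDist_le (ι := Fin N)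
          (μ := μ.restrict S) hmeas (ENNReal.one_le_ofReal.2 hC) (ENNReal.one_le_ofReal.2 hB₁)
          (by rwa [Measure.restrict_apply_univ])
          (fun y => (setLIntegral_le_lintegral S _).trans (hkernel y).1)
          (fun y => (setLIntegral_le_lintegral S _).trans (hkernel y).2)
    _ ≤ _ := pow_mul_pow_half_le_ofReal hC (sub_pos.2 hbD) N

end BoundedSet

/-- **Nearest-neighbour integral bound with logarithmic factors.**
There is `C > 0` (depending only on `d`) such that for all `N ≥ 2` and
`β ∈ (0, √d)`,
`∫_{B(0,1)^N} ∏_i |log min_{j≠i}|z_i−z_j|| (min_{j≠i}|z_i−z_j|)^{−β²/2} dz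
  ≤ C^N (d−β²)^{−3⌊N/2⌋} N^N`. -/
theorem stmt_7 (d : ℕ) (hd : 1 ≤ d) :
    ∃ C : ℝ, 0 < C ∧ ∀ N : ℕ, 2 ≤ N → ∀ β : ℝ, 0 < β → β < Real.sqrt d →
      (∫⁻ z : Fin N → EuclideanSpace ℝ (Fin d) in
          Set.univ.pi (fun _ : Fin N => Metric.ball (0 : EuclideanSpace ℝ (Fin d)) 1),
        ENNReal.ofReal (∏ i : Fin N,
          |Real.log (⨅ j : {j : Fin N // j ≠ i}, dist (z i) (z j.1))|
            * (⨅ j : {j : Fin N // j ≠ i}, dist (z i) (z j.1)) ^ (-(β ^ 2) / 2)))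
      ≤ ENNReal.ofReal
          (C ^ N * ((d : ℝ) - β ^ 2) ^ (-(3 * ((N / 2 : ℕ) : ℝ)))
            * (N : ℝ) ^ N) := by
  have : Nonempty (Fin d) := ⟨⟨0, hd⟩⟩
  obtain ⟨C, hC, hbound⟩ := stmt_7_general (volume : Measure (EuclideanSpace ℝ (Fin d)))
    (Metric.isBounded_ball (x := 0) (r := 1))
  rw [finrank_euclideanSpace_fin] at hbound
  exact ⟨C, hC, fun N hN β hβ hβd =>
    hbound N hN (β ^ 2) (sq_nonneg β) ((Real.lt_sqrt hβ.le).1 hβd)⟩
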